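/- Let $p$ and $q$ be distinct odd primes and let $E$ be the $pq$-th cyclotomic field. For each integer $i$ with $0 \le i \le p-2$, let $\Delta_i$ be the subgroup of $E^{\times}/(E^{\times})^p$ generated by the classes of $\eta'_{i,1}, \eta'_{i,2}, \ldots, \eta'_{i,(q-1)/2}$. If $\delta_i \in \Delta_i$ for each $i \in \{0, 1, \ldots, p-2\}$ and $\prod_{i=0}^{p-2} \delta_i$ is the trivial class, then $\delta_i$ is the trivial class for every $i$. -/

import Mathlib

/-!
The classes `Δ_i` lie in eigenspaces, for distinct eigenvalues, of one linear operator.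

Let `V = E^×/(E^×)^p`, a vector space over `𝔽_p`. Pick a generator `b` of `𝔽_p^×` and let `c` be an
integer with `c ≡ b⁻¹ (mod p)` and `c ≡ 1 (mod q)`. The field embedding `σ` of `E` that raises the
`pq`-th roots of unity to the power `c` sends `ζ_p` to `ζ_p ^ c`, fixes `ζ_q`
(`exists_cycField_ringHom`), and hence sends `u_{s,j}` to `u_{cs,j}`. In additive notation the class
of `η'_{i,j}` is `∑_s s^i [u_{s,j}]`, so substituting `t = cs` shows that `σ` multiplies it by
`b^i`. As `b` has order `p - 1`, the eigenvalues `b^i` with `0 ≤ i ≤ p - 2` are distinct, and a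
vanishing sum of eigenvectors for distinct eigenvalues has all its terms zero
(`eq_zero_of_sum_eigenvectors_eq_zero`).
-/

/-- `ζ_m = e^{2πi/m}`. -/
noncomputable def primRoot (m : ℕ) : ℂ := Complex.exp (2 * (Real.pi : ℂ) * Complex.I / (m : ℂ))

/-- The `pq`-th cyclotomic field `E = ℚ(ζ_p, ζ_q)` as a subfield of `ℂ`. -/
noncomputable def cycField (p q : ℕ) : IntermediateField ℚ ℂ :=
  IntermediateField.adjoin ℚ ({primRoot p, primRoot q} : Set ℂ)

/-- `η'_{i,j} = ∏_{s=0}^{p-1} (1 - ζ_q^j ζ_p^s)^{s^i}` (with `0^0 = 1`). -/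
noncomputable def etaElt' (p q i j : ℕ) : ℂ :=
  ∏ s ∈ Finset.range p, (1 - primRoot q ^ j * primRoot p ^ s) ^ (s ^ i)

lemma eq_zero_of_sum_eigenvectors_eq_zero {K V : Type*} [Field K] [AddCommGroup V] [Module K V]
    (f : Module.End K V) (μ : ℕ → K) (n : ℕ) (hμ : Set.InjOn μ (Finset.range n))
    (v : ℕ → V) (hv : ∀ i ∈ Finset.range n, f (v i) = μ i • v i)
    (h : ∑ i ∈ Finset.range n, v i = 0) : ∀ i ∈ Finset.range n, v i = 0 := by
  have hind := Module.End.eigenspaces_iSupIndep f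
  intro i hi
  have hsum : v i = -∑ j ∈ (Finset.range n).erase i, v j := by
    rw [← Finset.add_sum_erase _ _ hi] at h
    exact eq_neg_of_add_eq_zero_left h
  have hdisj := hind.comp (f := fun i : Finset.range n => μ i)
    (fun i j hij => Subtype.ext (hμ i.2 j.2 hij)) ⟨i, hi⟩
  refine Submodule.disjoint_def.1 hdisj (v i) (Module.End.mem_eigenspace_iff.2 (hv i hi)) ?_
  rw [hsum]
  refine neg_mem (Submodule.sum_mem _ fun j hj => ?_)
  obtain ⟨hji, hj⟩ := Finset.mem_erase.1 hj
  refine Submodule.mem_iSup_of_mem ⟨j, hj⟩ (Submodule.mem_iSup_of_mem ?_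
    (Module.End.mem_eigenspace_iff.2 (hv j hj)))
  exact fun e => hji (congrArg Subtype.val e)

lemma isPrimitiveRoot_primRoot {m : ℕ} (hm : m ≠ 0) : IsPrimitiveRoot (primRoot m) m :=
  Complex.isPrimitiveRoot_exp m hm

lemma primRoot_mul_pow {p q : ℕ} (hp : p ≠ 0) (hq : q ≠ 0) :
    primRoot (p * q) ^ q = primRoot p := by
  have h1 : (p : ℂ) ≠ 0 := Nat.cast_ne_zero.2 hp
  have h2 : (q : ℂ) ≠ 0 := Nat.cast_ne_zero.2 hq
  rw [primRoot, primRoot, ← Complex.exp_nat_mul]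
  congr 1
  push_cast
  field_simp

lemma cycField_eq_adjoin {p q : ℕ} (hp : p ≠ 0) (hq : q ≠ 0) (hpq : p.Coprime q) :
    cycField p q = IntermediateField.adjoin ℚ {primRoot (p * q)} := by
  have e1 := primRoot_mul_pow hp hq
  have e2 : primRoot (p * q) ^ p = primRoot q := by rw [mul_comm, primRoot_mul_pow hq hp]
  apply le_antisymm
  · rw [cycField, IntermediateField.adjoin_le_iff]
    have hz := IntermediateField.mem_adjoin_simple_self ℚ (primRoot (p * q))
    rintro x (rfl | rfl)
    · rw [← e1]; exact pow_mem hz q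
    · rw [← e2]; exact pow_mem hz p
  · rw [cycField, IntermediateField.adjoin_simple_le_iff]
    have hzp : primRoot p ∈ IntermediateField.adjoin ℚ ({primRoot p, primRoot q} : Set ℂ) :=
      IntermediateField.subset_adjoin _ _ (by simp)
    have hzq : primRoot q ∈ IntermediateField.adjoin ℚ ({primRoot p, primRoot q} : Set ℂ) :=
      IntermediateField.subset_adjoin _ _ (by simp)
    -- Bézout: `1 = p x + q y`, so `ζ_{pq} = ζ_q ^ x * ζ_p ^ y`.
    have key : primRoot (p * q) = primRoot q ^ (p.gcdA q) * primRoot p ^ (p.gcdB q) := by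
      have hb := Nat.gcd_eq_gcd_ab p q
      rw [hpq.gcd_eq_one] at hb
      have hz : primRoot (p * q) ≠ 0 := Complex.exp_ne_zero _
      rw [← e1, ← e2, ← zpow_natCast, ← zpow_natCast, ← zpow_mul, ← zpow_mul, ← zpow_add₀ hz,
        ← hb]
      simp
    rw [key]
    exact mul_mem (zpow_mem hzq _) (zpow_mem hzp _)

lemma exists_ringHom_adjoin {F L : Type*} [Field F] [Field L] [Algebra F L] {ζ : L}
    (hint : IsIntegral F ζ) (c : ℕ) (hroot : Polynomial.aeval (ζ ^ c) (minpoly F ζ) = 0) :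
    ∃ σ : IntermediateField.adjoin F {ζ} →+* IntermediateField.adjoin F {ζ},
      ∀ x : IntermediateField.adjoin F {ζ}, (x : L) = ζ → σ x = x ^ c := by
  let pb := IntermediateField.adjoin.powerBasis hint
  have hgen : pb.gen = IntermediateField.AdjoinSimple.gen F ζ := rfl
  have hroot' : Polynomial.aeval (pb.gen ^ c) (minpoly F pb.gen) = 0 := by
    rw [hgen, IntermediateField.minpoly_gen]
    apply (algebraMap (IntermediateField.adjoin F {ζ}) L).injective
    rw [← Polynomial.aeval_algebraMap_apply]
    simpa using hroot
  refine ⟨(pb.lift (pb.gen ^ c) hroot').toRingHom, fun x hx => ?_⟩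
  have : x = pb.gen := Subtype.ext hx
  rw [this]
  exact pb.lift_gen _ _

/-- A primitive `n`-th root of unity and its `c`-th power, `c` coprime to `n`, have the same
minimal polynomial, so there is an embedding carrying the first to the second. -/
lemma exists_ringHom_of_eq_adjoin {n c : ℕ} (hn : 0 < n) (hc : c.Coprime n) {ζ : ℂ}
    (hζ : IsPrimitiveRoot ζ n) (K : IntermediateField ℚ ℂ)
    (hK : K = IntermediateField.adjoin ℚ {ζ}) :
    ∃ σ : K →+* K, ∀ x : K, (x : ℂ) = ζ → σ x = x ^ c := by
  subst hK
  refine exists_ringHom_adjoin (hζ.isIntegral hn).tower_top c ?_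
  rw [← Polynomial.cyclotomic_eq_minpoly_rat hζ hn, Polynomial.aeval_def,
    Polynomial.eval₂_eq_eval_map, Polynomial.map_cyclotomic]
  exact (hζ.pow_of_coprime c hc).isRoot_cyclotomic hn

lemma exists_cycField_ringHom {p q c : ℕ} (hp : 0 < p) (hq : 0 < q) (hpq : p.Coprime q)
    (hcp : c.Coprime p) (hcq : c ≡ 1 [MOD q]) :
    ∃ σ : cycField p q →+* cycField p q,
      (∀ x : cycField p q, (x : ℂ) = primRoot p → σ x = x ^ c) ∧
      ∀ x : cycField p q, (x : ℂ) = primRoot q → σ x = x := by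
  have hK := cycField_eq_adjoin hp.ne' hq.ne' hpq
  have hccq : c.Coprime q := by
    rw [Nat.Coprime, hcq.gcd_eq]; simp
  obtain ⟨σ, hσ⟩ := exists_ringHom_of_eq_adjoin (Nat.mul_pos hp hq) (hcp.mul_right hccq)
    (isPrimitiveRoot_primRoot (Nat.mul_pos hp hq).ne') (cycField p q) hK
  have hz : primRoot (p * q) ∈ cycField p q := by
    rw [hK]; exact IntermediateField.mem_adjoin_simple_self ℚ _
  have hs := hσ ⟨_, hz⟩ rfl
  have e2 : primRoot (p * q) ^ p = primRoot q := by
    rw [mul_comm, primRoot_mul_pow hq.ne' hp.ne']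
  refine ⟨σ, fun x hx => ?_, fun x hx => ?_⟩
  · have : x = ⟨_, hz⟩ ^ q := Subtype.ext (by
      rw [hx, ← primRoot_mul_pow hp.ne' hq.ne']; rfl)
    rw [this, map_pow, hs, ← pow_mul, ← pow_mul, mul_comm c q]
  · have : x = ⟨_, hz⟩ ^ p := Subtype.ext (by rw [hx, ← e2]; rfl)
    have hx1 : x ^ q = 1 := Subtype.ext (by
      change (x : ℂ) ^ q = 1
      rw [hx, (isPrimitiveRoot_primRoot hq.ne').pow_eq_one])
    have h1 : σ x = x ^ c := by
      rw [this, map_pow, hs, ← pow_mul, ← pow_mul, mul_comm c p]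
    rw [h1, pow_eq_pow_mod c hx1, hcq, ← pow_eq_pow_mod 1 hx1, pow_one]

lemma one_sub_ne_zero {p q j s : ℕ} (hp : p.Prime) (hq : q.Prime) (hpq : p ≠ q)
    (hj : 1 ≤ j) (hjq : j < q) : 1 - primRoot q ^ j * primRoot p ^ s ≠ 0 := by
  intro h
  have h1 : primRoot q ^ j * primRoot p ^ s = 1 := (sub_eq_zero.1 h).symm
  have h2 : primRoot q ^ (j * p) = 1 := by
    have := congrArg (· ^ p) h1
    simpa [mul_pow, ← pow_mul, mul_comm s p, pow_mul (primRoot p),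
      (isPrimitiveRoot_primRoot hp.ne_zero).pow_eq_one] using this
  rcases hq.dvd_mul.1 ((isPrimitiveRoot_primRoot hq.ne_zero).dvd_of_pow_eq_one _ h2) with h3 | h3
  · exact absurd (Nat.le_of_dvd hj h3) (by omega)
  · exact hpq ((Nat.prime_dvd_prime_iff_eq hq hp).1 h3).symm

/-- The group `K^×/(K^×)^p`, written additively. -/
def PowQuot (K : Type*) [Field K] (p : ℕ) : Type _ :=
  Additive (Kˣ ⧸ (powMonoidHom p : Kˣ →* Kˣ).range)

instance (K : Type*) [Field K] (p : ℕ) : AddCommGroup (PowQuot K p) :=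
  inferInstanceAs (AddCommGroup (Additive (Kˣ ⧸ (powMonoidHom p : Kˣ →* Kˣ).range)))

instance (K : Type*) [Field K] (p : ℕ) : Module (ZMod p) (PowQuot K p) :=
  AddCommGroup.zmodModule (by
    intro x
    obtain ⟨z, rfl⟩ := QuotientGroup.mk_surjective (s := (powMonoidHom p : Kˣ →* Kˣ).range) x
    exact (QuotientGroup.eq_one_iff (N := (powMonoidHom p : Kˣ →* Kˣ).range) (z ^ p)).2
      (MonoidHom.mem_range.2 ⟨z, rfl⟩))

/-- The class of a unit in `K^×/(K^×)^p`. -/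
def PowQuot.cls {K : Type*} [Field K] (p : ℕ) (x : Kˣ) : PowQuot K p :=
  Additive.ofMul (QuotientGroup.mk x)

namespace PowQuot

variable {K : Type*} [Field K] {p : ℕ}

lemma cls_one : cls p (1 : Kˣ) = 0 := rfl

lemma cls_mul (x y : Kˣ) : cls p (x * y) = cls p x + cls p y := rfl

lemma cls_pow (x : Kˣ) (n : ℕ) : cls p (x ^ n) = (n : ZMod p) • cls p x := by
  rw [Nat.cast_smul_eq_nsmul]; rfl

lemma cls_zpow (x : Kˣ) (n : ℤ) : cls p (x ^ n) = (n : ZMod p) • cls p x := by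
  rw [Int.cast_smul_eq_zsmul (ZMod p)]; rfl

lemma cls_prod {ι : Type*} (s : Finset ι) (f : ι → Kˣ) :
    cls p (∏ i ∈ s, f i) = ∑ i ∈ s, cls p (f i) := by
  classical
  induction s using Finset.induction_on with
  | empty => simp [cls_one]
  | insert a s ha ih => rw [Finset.prod_insert ha, Finset.sum_insert ha, cls_mul, ih]

lemma cls_eq_zero_iff (x : Kˣ) : cls p x = 0 ↔ ∃ w : Kˣ, w ^ p = x :=
  QuotientGroup.eq_one_iff x

/-- A field endomorphism of `K` acts `𝔽_p`-linearly on `K^×/(K^×)^p`. -/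
lemma exists_map (σ : K →+* K) :
    ∃ f : Module.End (ZMod p) (PowQuot K p),
      ∀ x : Kˣ, f (cls p x) = cls p (Units.map (σ : K →* K) x) := by
  let g : (Kˣ ⧸ (powMonoidHom p : Kˣ →* Kˣ).range) →* (Kˣ ⧸ (powMonoidHom p : Kˣ →* Kˣ).range) :=
    QuotientGroup.map _ _ (Units.map (σ : K →* K)) (by
      rintro _ ⟨y, rfl⟩
      exact ⟨Units.map (σ : K →* K) y, (map_pow (Units.map (σ : K →* K)) y p).symm⟩)
  let f : Module.End (ZMod p) (PowQuot K p) :=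
    AddMonoidHom.toZModLinearMap p (M := PowQuot K p) (M₁ := PowQuot K p) (MonoidHom.toAdditive g)
  exact ⟨f, fun _ => rfl⟩

end PowQuot

/-- Reindexing `s ↦ c s` turns the action of `σ` on `∑ s ^ i [u_s]` into multiplication
by `b ^ i`, where `b c = 1`. -/
lemma eigenvector_sum {p : ℕ} [Fact p.Prime] {V : Type*} [AddCommGroup V] [Module (ZMod p) V]
    (f : Module.End (ZMod p) V) (U : ZMod p → V) (b c : ZMod p) (hbc : b * c = 1)
    (hf : ∀ s, f (U s) = U (c * s)) (i : ℕ) :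
    f (∑ s, s ^ i • U s) = b ^ i • ∑ s, s ^ i • U s := by
  have hc : c ≠ 0 := right_ne_zero_of_mul_eq_one hbc
  rw [map_sum, Finset.smul_sum,
    ← Equiv.sum_comp (Equiv.mulLeft₀ c hc) fun s => b ^ i • s ^ i • U s]
  refine Finset.sum_congr rfl fun s _ => ?_
  rw [map_smul, hf, smul_smul, ← mul_pow]
  simp [← mul_assoc, hbc]

lemma sum_range_eq_sum_zmod {p : ℕ} [Fact p.Prime] {V : Type*} [AddCommMonoid V]
    (F : ZMod p → V) : ∑ s ∈ Finset.range p, F s = ∑ s, F s := by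
  refine Finset.sum_bij' (fun s _ => (s : ZMod p)) (fun s _ => s.val) ?_ ?_ ?_ ?_ ?_
  · simp
  · intro s _; simpa using ZMod.val_lt s
  · intro s hs; exact ZMod.val_cast_of_lt (Finset.mem_range.1 hs)
  · intro s _; simp
  · simp

open PowQuot in
/-- For distinct odd primes `p, q`, the subgroups `Δ_i` of
`E^×/(E^×)^p` generated by the classes of `η'_{i,1}, …, η'_{i,(q-1)/2}` are
independent: if `δ_i ∈ Δ_i` for `0 ≤ i ≤ p-2` — say `δ_i` is the class of
`∏_j η'_{i,j}^{m i j}` — and `∏_{i=0}^{p-2} δ_i` is trivial, then every `δ_i`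
is trivial. -/
theorem delta_subgroups_independent (p q : ℕ) (hp : p.Prime) (hq : q.Prime)
    (hpo : Odd p) (hqo : Odd q) (hpq : p ≠ q)
    (m : ℕ → ℕ → ℤ)
    (h : ∃ w : ℂ, w ∈ cycField p q ∧ w ≠ 0 ∧
      (∏ i ∈ Finset.range (p - 1), ∏ j ∈ Finset.Icc 1 ((q - 1) / 2),
        etaElt' p q i j ^ m i j) = w ^ p) :
    ∀ i, i ≤ p - 2 → ∃ w : ℂ, w ∈ cycField p q ∧ w ≠ 0 ∧
      (∏ j ∈ Finset.Icc 1 ((q - 1) / 2), etaElt' p q i j ^ m i j) = w ^ p := by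
  have : Fact p.Prime := ⟨hp⟩
  have hcop : p.Coprime q := (Nat.coprime_primes hp hq).2 hpq
  let J := Finset.Icc 1 ((q - 1) / 2)
  have hJ : ∀ j ∈ J, 1 ≤ j ∧ j < q := fun j hj => by
    have := Finset.mem_Icc.1 hj
    have := hq.two_le
    omega
  -- A generator `b` of `𝔽_p^×` and an exponent `c ≡ b⁻¹ (mod p)`, `c ≡ 1 (mod q)`.
  obtain ⟨b, hb⟩ := IsCyclic.exists_ofOrder_eq_natCard (α := (ZMod p)ˣ)
  have hbo : orderOf (b : ZMod p) = p - 1 := by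
    rw [orderOf_units, hb, Nat.card_eq_fintype_card, ZMod.card_units]
  obtain ⟨c, hc1, hc2⟩ := Nat.chineseRemainder hcop ((b⁻¹ : (ZMod p)ˣ) : ZMod p).val 1
  have hcb : (c : ZMod p) = ((b⁻¹ : (ZMod p)ˣ) : ZMod p) := by
    rw [(ZMod.natCast_eq_natCast_iff _ _ _).2 hc1, ZMod.natCast_zmod_val]
  have hbc : (b : ZMod p) * (c : ZMod p) = 1 := by
    rw [hcb, Units.mul_inv]
  have hcp : c.Coprime p := by
    rw [← ZMod.isUnit_iff_coprime, hcb]; exact Units.isUnit _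
  obtain ⟨σ, hσp, hσq⟩ := exists_cycField_ringHom hp.pos hq.pos hcop hcp hc2
  obtain ⟨f, hf⟩ := exists_map (p := p) σ
  have hzp : primRoot p ∈ cycField p q :=
    IntermediateField.subset_adjoin _ _ (Set.mem_insert _ _)
  have hzq : primRoot q ∈ cycField p q :=
    IntermediateField.subset_adjoin _ _ (Set.mem_insert_of_mem _ rfl)
  have hσp := hσp ⟨_, hzp⟩ rfl
  have hσq := hσq ⟨_, hzq⟩ rfl
  set zp : cycField p q := ⟨_, hzp⟩
  set zq : cycField p q := ⟨_, hzq⟩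
  have hzp1 : zp ^ p = 1 :=
    Subtype.ext (isPrimitiveRoot_primRoot hp.ne_zero).pow_eq_one
  have hne : ∀ j ∈ J, ∀ s : ℕ, 1 - zq ^ j * zp ^ s ≠ 0 := fun j hj s h0 =>
    one_sub_ne_zero (s := s) hp hq hpq (hJ j hj).1 (hJ j hj).2 (congrArg Subtype.val h0)
  -- `u s j` is `u_{s,j}` as a unit of `E`; the value `1` for `j ∉ J` plays no role.
  classical
  let u : ℕ → ℕ → (cycField p q)ˣ := fun s j =>
    if hj : j ∈ J then Units.mk0 _ (hne j hj s) else 1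
  have hu : ∀ j ∈ J, ∀ s, ((u s j : cycField p q) : ℂ) = 1 - primRoot q ^ j * primRoot p ^ s := by
    intro j hj s
    simp only [u, dif_pos hj]
    rfl
  have humod : ∀ s j, u (s % p) j = u s j := by
    intro s j
    simp only [u, ← pow_eq_pow_mod s hzp1]
  have hσu : ∀ j s, Units.map (σ : cycField p q →* cycField p q) (u s j)
      = u (c * s) j := by
    intro j s
    by_cases hj : j ∈ J
    · ext1
      simp [u, dif_pos hj, hσp, hσq, pow_mul]
    · simp [u, dif_neg hj]
  let U : ℕ → ZMod p → PowQuot (cycField p q) p := fun j s => cls p (u s.val j)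
  have hUcast : ∀ j (s : ℕ), U j s = cls p (u s j) := by
    intro j s
    simp only [U, ZMod.val_natCast, humod]
  have hfU : ∀ j s, f (U j s) = U j (c * s) := by
    intro j s
    simp only [U]
    rw [hf, hσu, ← hUcast]
    simp [U]
  let η : ℕ → ℕ → (cycField p q)ˣ := fun i j => ∏ s ∈ Finset.range p, u s j ^ (s ^ i)
  have hη : ∀ i, ∀ j ∈ J, ((η i j : cycField p q) : ℂ) = etaElt' p q i j := by
    intro i j hj
    simp [η, etaElt', hu j hj]
  have hηcls : ∀ i j, cls p (η i j) = ∑ s, s ^ i • U j s := by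
    intro i j
    simp only [η]
    rw [cls_prod, ← sum_range_eq_sum_zmod]
    refine Finset.sum_congr rfl fun s _ => ?_
    rw [cls_pow, hUcast, Nat.cast_pow]
  let δ : ℕ → (cycField p q)ˣ := fun i => ∏ j ∈ J, η i j ^ m i j
  have hδ : ∀ i, ((δ i : cycField p q) : ℂ) = ∏ j ∈ J, etaElt' p q i j ^ m i j := by
    intro i
    simp only [δ, Units.coe_prod, Units.val_zpow_eq_zpow_val]
    refine (map_prod (algebraMap (cycField p q) ℂ) _ _).trans ?_
    refine Finset.prod_congr rfl fun j hj => ?_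
    rw [← hη i j hj]
    exact map_zpow₀ (algebraMap (cycField p q) ℂ) _ _
  have heig : ∀ i, f (cls p (δ i)) = (b : ZMod p) ^ i • cls p (δ i) := by
    intro i
    simp only [δ]
    rw [cls_prod, map_sum, Finset.smul_sum]
    refine Finset.sum_congr rfl fun j _ => ?_
    rw [cls_zpow, map_smul, hηcls, eigenvector_sum f (U j) b c hbc (hfU j) i, smul_comm]
  have hsum : ∑ i ∈ Finset.range (p - 1), cls p (δ i) = 0 := by
    obtain ⟨w, hw, hw0, hwp⟩ := h
    rw [← cls_prod, cls_eq_zero_iff]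
    refine ⟨Units.mk0 ⟨w, hw⟩ (fun h0 => hw0 (congrArg Subtype.val h0)), ?_⟩
    ext
    simp only [Units.coe_prod, Units.val_pow_eq_pow_val, Units.val_mk0]
    push_cast
    rw [← hwp]
    exact Finset.prod_congr rfl fun i _ => (hδ i).symm
  have hinj : Set.InjOn (fun i => (b : ZMod p) ^ i) (Finset.range (p - 1)) := by
    intro i hi j hj hij
    have hi := Finset.mem_range.1 hi
    have hj := Finset.mem_range.1 hj
    exact pow_injOn_Iio_orderOf (by simpa [hbo] using hi) (by simpa [hbo] using hj) hij
  intro i hi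
  have h2 := hp.two_le
  obtain ⟨w, hw⟩ := (cls_eq_zero_iff _).1 (eq_zero_of_sum_eigenvectors_eq_zero f _ _ hinj
    (fun i => cls p (δ i)) (fun i _ => heig i) hsum i (Finset.mem_range.2 (by omega)))
  refine ⟨(w : cycField p q), (w : cycField p q).2, ?_, ?_⟩
  · exact fun h0 => w.ne_zero (Subtype.ext h0)
  · rw [← hδ i, ← hw]
    simp
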